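/- Let p > 0, 0 < δ < p, λ > 0, μ > 0, q > 0, r > 0, β > 0. Let V : [0,∞) → ℝ be the explicit Parisian refracted scale function of the Cramér–Lundberg model, V(x) = e^{qr}(p−δ)𝕎^{(q)}(x) − (1/(μλ))[(q+λ)𝕎^{(q)}(x) − (p−δ)𝕎^{(q)′}(x)][(q+λ)e^{qr} − p·C], where C is the explicit constant C = e^{−λr}[ p W^{(q)′}(pr) + A⁻ q⁺(q) e^{q⁺(q)pr} Σ_{m=0}^∞ ((pr(q⁻(q)+μ))^m/(m!(m+1)!)) γ(m+1, (q⁺(q)+μ)pr) (pr(q⁺(q)+μ) − (m+1)) − A⁺ q⁻(q) e^{q⁻(q)pr} Σ_{m=0}^∞ ((pr(q⁺(q)+μ))^m/(m!(m+1)!)) γ(m+1, (q⁻(q)+μ)pr) (pr(q⁻(q)+μ) − (m+1)) + (e^{−μpr}/(pr)) Σ_{m=0}^∞ ((pλμr²)^{m+1}/(m!(m+1)!)) ]. Define g(c₁,c₂) = (V(c₂) − V(c₁))/(c₂ − c₁ − β) on dom(g) = {(c₁,c₂) : c₁ ≥ 0, c₂ > c₁ + β}. Then g attains its infimum on dom(g),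 and every minimizer (c₁*, c₂*) satisfies V′(c₂*) = (V(c₂*) − V(c₁*))/(c₂* − c₁* − β); moreover either V′(c₁*) = V′(c₂*) or c₁* = 0. -/

import Mathlib

open MeasureTheory

/- Cramér–Lundberg model: X_t = pt − Σ_{i≤N_t}U_i with Poisson(λ) arrivals and
   Exp(μ) claims; Y_t = X_t − δt.  V is the explicit Parisian refracted scale
   function and g the cost ratio of the impulse (c₁,c₂) policy with
   transaction cost β.  The claim: g attains its infimum on
   dom(g) = {c₁ ≥ 0, c₂ > c₁ + β}, and every minimizer (c₁*,c₂*) satisfies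
   V′(c₂*) = (V(c₂*) − V(c₁*))/(c₂* − c₁* − β), and moreover either
   V′(c₁*) = V′(c₂*) or c₁* = 0. -/

noncomputable def qp (p lam μ q : ℝ) : ℝ :=
  (q + lam - μ * p + Real.sqrt ((q + lam - μ * p) ^ 2 + 4 * p * q * μ)) / (2 * p)

noncomputable def qm (p lam μ q : ℝ) : ℝ :=
  (q + lam - μ * p - Real.sqrt ((q + lam - μ * p) ^ 2 + 4 * p * q * μ)) / (2 * p)

noncomputable def Ap (p lam μ q : ℝ) : ℝ := (μ + qp p lam μ q) / (qp p lam μ q - qm p lam μ q)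

noncomputable def Am (p lam μ q : ℝ) : ℝ := (μ + qm p lam μ q) / (qp p lam μ q - qm p lam μ q)

/-- The q-scale function W^{(q)} of X (its formula on [0,∞)). -/
noncomputable def Wq (p lam μ q x : ℝ) : ℝ :=
  1 / p * (Ap p lam μ q * Real.exp (qp p lam μ q * x) -
    Am p lam μ q * Real.exp (qm p lam μ q * x))

/-- The q-scale function 𝕎^{(q)} of Y (its formula on [0,∞)). -/
noncomputable def WWq (p δ lam μ q x : ℝ) : ℝ := Wq (p - δ) lam μ q x

/-- Lower incomplete gamma function γ(a,x) = ∫₀ˣ t^{a−1}e^{−t} dt. -/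
noncomputable def lowerGamma (a x : ℝ) : ℝ :=
  ∫ t in (0 : ℝ)..x, t ^ (a - 1) * Real.exp (-t)

/-- The explicit constant C. -/
noncomputable def Cconst (p lam μ q r : ℝ) : ℝ :=
  Real.exp (-lam * r) *
    (p * deriv (Wq p lam μ q) (p * r) +
      Am p lam μ q * qp p lam μ q * Real.exp (qp p lam μ q * (p * r)) *
        (∑' m : ℕ, (p * r * (qm p lam μ q + μ)) ^ m /
            ((Nat.factorial m : ℝ) * (Nat.factorial (m + 1) : ℝ)) *
          lowerGamma ((m : ℝ) + 1) ((qp p lam μ q + μ) * (p * r)) *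
          (p * r * (qp p lam μ q + μ) - ((m : ℝ) + 1))) -
      Ap p lam μ q * qm p lam μ q * Real.exp (qm p lam μ q * (p * r)) *
        (∑' m : ℕ, (p * r * (qp p lam μ q + μ)) ^ m /
            ((Nat.factorial m : ℝ) * (Nat.factorial (m + 1) : ℝ)) *
          lowerGamma ((m : ℝ) + 1) ((qm p lam μ q + μ) * (p * r)) *
          (p * r * (qm p lam μ q + μ) - ((m : ℝ) + 1))) +
      Real.exp (-μ * (p * r)) / (p * r) *
        (∑' m : ℕ, (p * lam * μ * r ^ 2) ^ (m + 1) /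
          ((Nat.factorial m : ℝ) * (Nat.factorial (m + 1) : ℝ))))

/-- The explicit Parisian refracted scale function V^{(q)} on [0,∞) for the
Cramér–Lundberg model. -/
noncomputable def Vq (p δ lam μ q r x : ℝ) : ℝ :=
  Real.exp (q * r) * (p - δ) * WWq p δ lam μ q x -
    1 / (μ * lam) *
      ((q + lam) * WWq p δ lam μ q x - (p - δ) * deriv (WWq p δ lam μ q) x) *
      ((q + lam) * Real.exp (q * r) - p * Cconst p lam μ q r)

/-- The cost-ratio function g of the impulse (c₁,c₂) policy. -/
noncomputable def gfun (p δ lam μ q r β c₁ c₂ : ℝ) : ℝ :=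
  (Vq p δ lam μ q r c₂ - Vq p δ lam μ q r c₁) / (c₂ - c₁ - β)

/-! ### Roots of the Lundberg equation -/

lemma discr_pos {p lam μ q : ℝ} (hp : 0 < p) (hμ : 0 < μ) (hq : 0 < q) :
    0 < (q + lam - μ * p) ^ 2 + 4 * p * q * μ := by positivity

lemma abs_lt_sqrt_discr {p lam μ q : ℝ} (hp : 0 < p) (hμ : 0 < μ) (hq : 0 < q) :
    |q + lam - μ * p| < Real.sqrt ((q + lam - μ * p) ^ 2 + 4 * p * q * μ) := by
  rw [← Real.sqrt_sq_eq_abs]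
  apply Real.sqrt_lt_sqrt (sq_nonneg _)
  have : 0 < 4 * p * q * μ := by positivity
  linarith

lemma qp_pos {p lam μ q : ℝ} (hp : 0 < p) (hμ : 0 < μ) (hq : 0 < q) :
    0 < qp p lam μ q := by
  have h := (abs_lt.1 (abs_lt_sqrt_discr (lam := lam) hp hμ hq)).1
  unfold qp
  apply div_pos <;> linarith

lemma qm_neg {p lam μ q : ℝ} (hp : 0 < p) (hμ : 0 < μ) (hq : 0 < q) :
    qm p lam μ q < 0 := by
  have h := (abs_lt.1 (abs_lt_sqrt_discr (lam := lam) hp hμ hq)).2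
  unfold qm
  apply div_neg_of_neg_of_pos <;> linarith

lemma qp_add_qm {p lam μ q : ℝ} (hp : 0 < p) :
    p * (qp p lam μ q + qm p lam μ q) = q + lam - μ * p := by
  unfold qp qm
  field_simp
  ring

lemma qp_mul_qm {p lam μ q : ℝ} (hp : 0 < p) (hμ : 0 < μ) (hq : 0 < q) :
    p * (qp p lam μ q * qm p lam μ q) = -(q * μ) := by
  have h := Real.sq_sqrt (discr_pos (lam := lam) hp hμ hq).le
  unfold qp qm
  generalize Real.sqrt ((q + lam - μ * p) ^ 2 + 4 * p * q * μ) = d at h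
  field_simp
  linear_combination -h

lemma qp_add_mul_qm_add {p lam μ q : ℝ} (hp : 0 < p) (hμ : 0 < μ) (hq : 0 < q) :
    p * ((qp p lam μ q + μ) * (qm p lam μ q + μ)) = lam * μ := by
  linear_combination qp_mul_qm (lam := lam) hp hμ hq +
    μ * qp_add_qm (lam := lam) (μ := μ) (q := q) hp

lemma qm_add_pos {p lam μ q : ℝ} (hp : 0 < p) (hlam : 0 < lam) (hμ : 0 < μ) (hq : 0 < q) :
    0 < qm p lam μ q + μ := by
  have h := qp_add_mul_qm_add (lam := lam) hp hμ hq
  have h1 : 0 < p * (qp p lam μ q + μ) := mul_pos hp (add_pos (qp_pos hp hμ hq) hμ)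
  have h2 : 0 < p * (qp p lam μ q + μ) * (qm p lam μ q + μ) := by
    rw [mul_assoc, h]; positivity
  exact pos_of_mul_pos_right h2 h1.le

/-! ### The scale function -/

lemma hasDerivAt_exp_const_mul (a x : ℝ) :
    HasDerivAt (fun y => Real.exp (a * y)) (a * Real.exp (a * x)) x := by
  simpa [mul_comm] using ((hasDerivAt_id x).const_mul a).exp

lemma hasDerivAt_Wq (p lam μ q x : ℝ) :
    HasDerivAt (Wq p lam μ q)
      (1 / p * (Ap p lam μ q * (qp p lam μ q * Real.exp (qp p lam μ q * x)) -
        Am p lam μ q * (qm p lam μ q * Real.exp (qm p lam μ q * x)))) x :=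
  (((hasDerivAt_exp_const_mul _ x).const_mul _).sub
    ((hasDerivAt_exp_const_mul _ x).const_mul _)).const_mul _

lemma deriv_Wq (p lam μ q x : ℝ) :
    deriv (Wq p lam μ q) x =
      1 / p * (Ap p lam μ q * (qp p lam μ q * Real.exp (qp p lam μ q * x)) -
        Am p lam μ q * (qm p lam μ q * Real.exp (qm p lam μ q * x))) :=
  (hasDerivAt_Wq p lam μ q x).deriv

lemma deriv_Wq_pos {p lam μ q : ℝ} (hp : 0 < p) (hlam : 0 < lam) (hμ : 0 < μ) (hq : 0 < q)
    (x : ℝ) : 0 < deriv (Wq p lam μ q) x := by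
  rw [deriv_Wq]
  have hs := qp_pos (lam := lam) hp hμ hq
  have ht := qm_neg (lam := lam) hp hμ hq
  have hb := qm_add_pos hp hlam hμ hq
  have hAp : 0 < Ap p lam μ q := div_pos (by linarith) (by linarith)
  have hAm : 0 < Am p lam μ q := div_pos (by linarith) (by linarith)
  have h1 : 0 < Ap p lam μ q * (qp p lam μ q * Real.exp (qp p lam μ q * x)) := by positivity
  have h2 : Am p lam μ q * (qm p lam μ q * Real.exp (qm p lam μ q * x)) < 0 :=
    mul_neg_of_pos_of_neg hAm (mul_neg_of_neg_of_pos ht (Real.exp_pos _))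
  have := sub_pos.2 (h2.trans h1)
  positivity

/-! ### The lower incomplete gamma function at positive integers -/

lemma lowerGamma_natCast_add_one (m : ℕ) (x : ℝ) :
    lowerGamma ((m : ℝ) + 1) x = ∫ t in (0 : ℝ)..x, t ^ m * Real.exp (-t) := by
  simp [lowerGamma]

lemma hasDerivAt_lowerGamma (m : ℕ) (x : ℝ) :
    HasDerivAt (lowerGamma ((m : ℝ) + 1)) (x ^ m * Real.exp (-x)) x := by
  have hc : Continuous fun t : ℝ => t ^ m * Real.exp (-t) := by fun_prop
  rw [funext (lowerGamma_natCast_add_one m)]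
  exact intervalIntegral.integral_hasDerivAt_right (hc.intervalIntegrable _ _)
    (hc.stronglyMeasurableAtFilter _ _) hc.continuousAt

lemma abs_lowerGamma_le (m : ℕ) {x : ℝ} (hx : 0 ≤ x) :
    |lowerGamma ((m : ℝ) + 1) x| ≤ x ^ m * x := by
  rw [lowerGamma_natCast_add_one]
  have h := intervalIntegral.norm_integral_le_of_norm_le_const (a := 0) (b := x)
    (f := fun t : ℝ => t ^ m * Real.exp (-t)) (C := x ^ m) (by
      intro t ht
      rw [Set.uIoc_of_le hx] at ht
      rw [Real.norm_eq_abs, abs_of_nonneg (mul_nonneg (pow_nonneg ht.1.le _) (Real.exp_pos _).le)]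
      calc t ^ m * Real.exp (-t) ≤ x ^ m * 1 := by
            apply mul_le_mul (pow_le_pow_left₀ ht.1.le ht.2 _) _ (Real.exp_pos _).le
              (pow_nonneg hx _)
            exact Real.exp_le_one_iff.2 (by linarith [ht.1])
        _ = x ^ m := mul_one _)
  simpa [abs_of_nonneg hx] using h

lemma integral_pow_mul_exp_mul_sub (m : ℕ) {a : ℝ} (ha : a ≠ 0) (L : ℝ) :
    ∫ y in (0 : ℝ)..L, y ^ m * Real.exp (-(a * y)) * (L - y) =
      (lowerGamma ((m : ℝ) + 1) (a * L) * (a * L - ((m : ℝ) + 1)) / a ^ (m + 1) +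
        L ^ (m + 1) * Real.exp (-(a * L))) / a := by
  have hd : ∀ y : ℝ, HasDerivAt (fun y =>
      (lowerGamma ((m : ℝ) + 1) (a * y) * (a * L - ((m : ℝ) + 1)) / a ^ (m + 1) +
        y ^ (m + 1) * Real.exp (-(a * y))) / a) (y ^ m * Real.exp (-(a * y)) * (L - y)) y := by
    intro y
    have hlin : HasDerivAt (fun y : ℝ => a * y) a y := by
      simpa using (hasDerivAt_id y).const_mul a
    have hG := ((((hasDerivAt_lowerGamma m (a * y)).comp y hlin).mul_const
      (a * L - ((m : ℝ) + 1))).div_const (a ^ (m + 1)))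
    have hE := (hasDerivAt_pow (m + 1) y).mul (hasDerivAt_exp_const_mul (-a) y)
    simp only [neg_mul] at hE
    refine ((hG.add hE).div_const a).congr_deriv ?_
    push_cast
    simp only [mul_pow, pow_succ]
    field_simp
    ring
  rw [intervalIntegral.integral_eq_sub_of_hasDerivAt (fun y _ => hd y)
    (Continuous.intervalIntegrable (by fun_prop) _ _)]
  simp [lowerGamma]

lemma summable_lowerGamma_series (z : ℝ) {x : ℝ} (hx : 0 ≤ x) :
    Summable fun m : ℕ => z ^ m / ((Nat.factorial m : ℝ) * (Nat.factorial (m + 1) : ℝ)) *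
      lowerGamma ((m : ℝ) + 1) x * (x - ((m : ℝ) + 1)) := by
  refine Summable.of_norm_bounded
    (((Real.summable_pow_div_factorial (|z| * x)).mul_right (x * (x + 1)))) fun m => ?_
  have h1 := abs_lowerGamma_le m hx
  have hf : (1 : ℝ) ≤ (Nat.factorial m : ℝ) := by exact_mod_cast Nat.factorial_pos m
  have h2 : |x - ((m : ℝ) + 1)| / (Nat.factorial (m + 1) : ℝ) ≤ x + 1 := by
    rw [div_le_iff₀ (by positivity), Nat.factorial_succ]
    push_cast
    have hm : (0 : ℝ) ≤ m := Nat.cast_nonneg m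
    rw [abs_le]
    constructor <;> nlinarith [mul_nonneg hx hm, mul_nonneg (mul_nonneg hx hm) (sub_nonneg.2 hf),
      mul_nonneg hx (sub_nonneg.2 hf), mul_nonneg hm (sub_nonneg.2 hf)]
  rw [Real.norm_eq_abs, abs_mul, abs_mul, abs_div, abs_mul, abs_pow, Nat.abs_cast, Nat.abs_cast]
  calc |z| ^ m / ((Nat.factorial m : ℝ) * (Nat.factorial (m + 1) : ℝ)) *
        |lowerGamma ((m : ℝ) + 1) x| * |x - ((m : ℝ) + 1)|
      = |z| ^ m / (Nat.factorial m : ℝ) * |lowerGamma ((m : ℝ) + 1) x| *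
        (|x - ((m : ℝ) + 1)| / (Nat.factorial (m + 1) : ℝ)) := by ring
    _ ≤ |z| ^ m / (Nat.factorial m : ℝ) * (x ^ m * x) * (x + 1) := by gcongr
    _ = (|z| * x) ^ m / (Nat.factorial m : ℝ) * (x * (x + 1)) := by rw [mul_pow]; ring

lemma summable_pow_succ_div_factorial (z : ℝ) :
    Summable fun m : ℕ =>
      z ^ (m + 1) / ((Nat.factorial m : ℝ) * (Nat.factorial (m + 1) : ℝ)) := by
  refine Summable.of_norm_bounded
    ((Real.summable_pow_div_factorial |z|).mul_right |z|) fun m => ?_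
  have hf : (1 : ℝ) ≤ (Nat.factorial (m + 1) : ℝ) := by exact_mod_cast Nat.factorial_pos _
  rw [Real.norm_eq_abs, abs_div, abs_mul, abs_pow, Nat.abs_cast, Nat.abs_cast, pow_succ,
    div_mul_eq_mul_div]
  gcongr
  exact le_mul_of_one_le_right (by positivity) hf

/-! ### Positivity of the constant `Cconst` -/

/-- Each term of the three series in `Cconst` combines to an integral of `W^{(q)′}` against the
`m`-th term of the compound Poisson density. -/
lemma Cconst_term_eq_integral {p lam μ q r : ℝ} (hp : 0 < p) (hlam : 0 < lam) (hμ : 0 < μ)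
    (hq : 0 < q) (hr : 0 < r) (m : ℕ) :
    Am p lam μ q * qp p lam μ q * Real.exp (qp p lam μ q * (p * r)) *
        ((p * r * (qm p lam μ q + μ)) ^ m /
            ((Nat.factorial m : ℝ) * (Nat.factorial (m + 1) : ℝ)) *
          lowerGamma ((m : ℝ) + 1) ((qp p lam μ q + μ) * (p * r)) *
          (p * r * (qp p lam μ q + μ) - ((m : ℝ) + 1))) -
      Ap p lam μ q * qm p lam μ q * Real.exp (qm p lam μ q * (p * r)) *
        ((p * r * (qp p lam μ q + μ)) ^ m /
            ((Nat.factorial m : ℝ) * (Nat.factorial (m + 1) : ℝ)) *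
          lowerGamma ((m : ℝ) + 1) ((qm p lam μ q + μ) * (p * r)) *
          (p * r * (qm p lam μ q + μ) - ((m : ℝ) + 1))) +
      Real.exp (-μ * (p * r)) / (p * r) *
        ((p * lam * μ * r ^ 2) ^ (m + 1) /
          ((Nat.factorial m : ℝ) * (Nat.factorial (m + 1) : ℝ))) =
    (lam * μ * r) ^ (m + 1) / (r * ((Nat.factorial m : ℝ) * (Nat.factorial (m + 1) : ℝ))) *
      ∫ y in (0 : ℝ)..(p * r),
        deriv (Wq p lam μ q) (p * r - y) * (y ^ m * Real.exp (-(μ * y)) * (p * r - y)) := by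
  have hs := qp_pos (lam := lam) hp hμ hq
  have ht := qm_neg (lam := lam) hp hμ hq
  have hb := qm_add_pos hp hlam hμ hq
  have hab := qp_add_mul_qm_add (lam := lam) hp hμ hq
  have hAp : Ap p lam μ q = (μ + qp p lam μ q) / (qp p lam μ q - qm p lam μ q) := rfl
  have hAm : Am p lam μ q = (μ + qm p lam μ q) / (qp p lam μ q - qm p lam μ q) := rfl
  have hW := fun x => deriv_Wq p lam μ q x
  generalize qp p lam μ q = s at *
  generalize qm p lam μ q = t at *
  have ha : 0 < s + μ := by linarith
  have hst : 0 < s - t := by linarith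
  have hint : ∫ y in (0 : ℝ)..(p * r),
        deriv (Wq p lam μ q) (p * r - y) * (y ^ m * Real.exp (-(μ * y)) * (p * r - y)) =
      1 / p * (Ap p lam μ q * s * Real.exp (s * (p * r))) *
        (∫ y in (0 : ℝ)..(p * r), y ^ m * Real.exp (-((s + μ) * y)) * (p * r - y)) -
      1 / p * (Am p lam μ q * t * Real.exp (t * (p * r))) *
        (∫ y in (0 : ℝ)..(p * r), y ^ m * Real.exp (-((t + μ) * y)) * (p * r - y)) := by
    rw [← intervalIntegral.integral_const_mul, ← intervalIntegral.integral_const_mul,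
      ← intervalIntegral.integral_sub (Continuous.intervalIntegrable (by fun_prop) _ _)
        (Continuous.intervalIntegrable (by fun_prop) _ _)]
    refine intervalIntegral.integral_congr fun y _ => ?_
    have e : ∀ z : ℝ, Real.exp (z * (p * r - y)) * Real.exp (-(μ * y)) =
        Real.exp (z * (p * r)) * Real.exp (-((z + μ) * y)) := by
      intro z
      rw [← Real.exp_add, ← Real.exp_add]
      ring_nf
    simp only [hW]
    linear_combination 1 / p * y ^ m * (p * r - y) *
      (Ap p lam μ q * s * e s - Am p lam μ q * t * e t)
  rw [hint, integral_pow_mul_exp_mul_sub m ha.ne', integral_pow_mul_exp_mul_sub m hb.ne']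
  have e : ∀ z : ℝ, Real.exp (-((z + μ) * (p * r))) =
      Real.exp (-μ * (p * r)) / Real.exp (z * (p * r)) := by
    intro z
    rw [← Real.exp_sub]
    ring_nf
  rw [e s, e t, hAp, hAm, show p * lam * μ * r ^ 2 = (p * r) * (lam * μ * r) by ring, ← hab]
  generalize lowerGamma _ ((s + μ) * (p * r)) = G
  generalize lowerGamma _ ((t + μ) * (p * r)) = H
  have hE := Real.exp_pos (s * (p * r))
  have hF := Real.exp_pos (t * (p * r))
  generalize Real.exp (s * (p * r)) = E at *
  generalize Real.exp (t * (p * r)) = F at *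
  generalize Real.exp (-μ * (p * r)) = D
  rw [add_comm μ s, add_comm μ t]
  obtain ⟨a, rfl⟩ : ∃ a, s = a - μ := ⟨s + μ, by ring⟩
  obtain ⟨b, rfl⟩ : ∃ b, t = b - μ := ⟨t + μ, by ring⟩
  simp only [sub_add_cancel, sub_sub_sub_cancel_right] at *
  simp only [mul_pow, pow_succ]
  field_simp
  ring

lemma Cconst_nonneg {p lam μ q r : ℝ} (hp : 0 < p) (hlam : 0 < lam) (hμ : 0 < μ)
    (hq : 0 < q) (hr : 0 < r) : 0 ≤ Cconst p lam μ q r := by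
  have hs := qp_pos (lam := lam) hp hμ hq
  have hb := qm_add_pos hp hlam hμ hq
  have hpr : 0 < p * r := mul_pos hp hr
  have hW := fun x => (deriv_Wq_pos hp hlam hμ hq x).le
  have s1 := (summable_lowerGamma_series (p * r * (qm p lam μ q + μ))
    (x := (qp p lam μ q + μ) * (p * r)) (by positivity)).mul_left
      (Am p lam μ q * qp p lam μ q * Real.exp (qp p lam μ q * (p * r)))
  have s2 := (summable_lowerGamma_series (p * r * (qp p lam μ q + μ))
    (x := (qm p lam μ q + μ) * (p * r)) (by positivity)).mul_left
      (Ap p lam μ q * qm p lam μ q * Real.exp (qm p lam μ q * (p * r)))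
  have s3 := (summable_pow_succ_div_factorial (p * lam * μ * r ^ 2)).mul_left
    (Real.exp (-μ * (p * r)) / (p * r))
  simp only [mul_comm (_ + μ) (p * r)] at s1 s2
  unfold Cconst
  refine mul_nonneg (Real.exp_pos _).le ?_
  rw [add_sub_assoc, add_assoc]
  refine add_nonneg (mul_nonneg hp.le (hW _)) ?_
  simp only [mul_comm (_ + μ) (p * r)]
  rw [← tsum_mul_left, ← tsum_mul_left, ← tsum_mul_left, ← s1.tsum_sub s2,
    ← (s1.sub s2).tsum_add s3]
  refine tsum_nonneg fun m => ?_
  have h := Cconst_term_eq_integral hp hlam hμ hq hr m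
  simp only [mul_comm (_ + μ) (p * r)] at h
  rw [h]
  refine mul_nonneg (by positivity)
    (intervalIntegral.integral_nonneg hpr.le fun y hy => mul_nonneg (hW _) ?_)
  have := sub_nonneg.2 hy.2
  have := hy.1
  positivity

/-! ### The Parisian refracted scale function -/

lemma hasDerivAt_Vq {p δ lam μ q : ℝ} (hδp : δ < p) (hlam : 0 < lam) (hμ : 0 < μ)
    (hq : 0 < q) (r x : ℝ) :
    HasDerivAt (Vq p δ lam μ q r)
      (1 / ((p - δ) * (qp (p - δ) lam μ q - qm (p - δ) lam μ q)) *
        (Real.exp (q * r) * μ * q *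
            (Real.exp (qp (p - δ) lam μ q * x) - Real.exp (qm (p - δ) lam μ q * x)) +
          p * Cconst p lam μ q r *
            (qp (p - δ) lam μ q * Real.exp (qp (p - δ) lam μ q * x) -
              qm (p - δ) lam μ q * Real.exp (qm (p - δ) lam μ q * x)))) x := by
  have hP : 0 < p - δ := sub_pos.2 hδp
  have hs := qp_pos (lam := lam) hP hμ hq
  have ht := qm_neg (lam := lam) hP hμ hq
  have hsum := qp_add_qm (lam := lam) (μ := μ) (q := q) hP
  have hprod := qp_mul_qm (lam := lam) hP hμ hq
  have hAp : Ap (p - δ) lam μ q =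
    (μ + qp (p - δ) lam μ q) / (qp (p - δ) lam μ q - qm (p - δ) lam μ q) := rfl
  have hAm : Am (p - δ) lam μ q =
    (μ + qm (p - δ) lam μ q) / (qp (p - δ) lam μ q - qm (p - δ) lam μ q) := rfl
  have hW := hasDerivAt_Wq (p - δ) lam μ q x
  have hdW : deriv (WWq p δ lam μ q) = fun x => 1 / (p - δ) *
      (Ap (p - δ) lam μ q * (qp (p - δ) lam μ q * Real.exp (qp (p - δ) lam μ q * x)) -
        Am (p - δ) lam μ q * (qm (p - δ) lam μ q * Real.exp (qm (p - δ) lam μ q * x))) :=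
    funext (deriv_Wq (p - δ) lam μ q)
  have hd2 : HasDerivAt (deriv (WWq p δ lam μ q)) (1 / (p - δ) *
      (Ap (p - δ) lam μ q * (qp (p - δ) lam μ q *
          (qp (p - δ) lam μ q * Real.exp (qp (p - δ) lam μ q * x))) -
        Am (p - δ) lam μ q * (qm (p - δ) lam μ q *
          (qm (p - δ) lam μ q * Real.exp (qm (p - δ) lam μ q * x))))) x := by
    rw [hdW]
    exact ((((hasDerivAt_exp_const_mul _ x).const_mul _).const_mul _).sub
      (((hasDerivAt_exp_const_mul _ x).const_mul _).const_mul _)).const_mul _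
  have hV := (hW.const_mul (Real.exp (q * r) * (p - δ))).sub
    ((((hW.const_mul (q + lam)).sub (hd2.const_mul (p - δ))).const_mul (1 / (μ * lam))).mul_const
      ((q + lam) * Real.exp (q * r) - p * Cconst p lam μ q r))
  refine HasDerivAt.congr_deriv (f := Vq p δ lam μ q r) hV ?_
  rw [hAp, hAm]
  generalize Cconst p lam μ q r = C
  generalize p - δ = P at *
  generalize qp P lam μ q = s at *
  generalize qm P lam μ q = t at *
  have hst : 0 < s - t := by linarith
  have root_s : (q + lam - P * s) * (s + μ) = lam * μ := by
    linear_combination -s * hsum + hprod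
  have root_t : (q + lam - P * t) * (t + μ) = lam * μ := by
    linear_combination -t * hsum + hprod
  generalize Real.exp (q * r) = E
  generalize Real.exp (s * x) = S
  generalize Real.exp (t * x) = T
  have quad_s : P * s * (s + μ) - (q + lam) * s = μ * q := by
    linear_combination s * hsum - hprod
  have quad_t : P * t * (t + μ) - (q + lam) * t = μ * q := by
    linear_combination t * hsum - hprod
  field_simp
  linear_combination -((q + lam) * E - p * C) * (s * S * root_s - t * T * root_t) +
    μ * lam * E * (S * quad_s - T * quad_t)

lemma deriv_Vq_pos {p δ lam μ q r : ℝ} (hp : 0 < p) (hδp : δ < p) (hlam : 0 < lam) (hμ : 0 < μ)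
    (hq : 0 < q) (hr : 0 < r) {x : ℝ} (hx : 0 < x) : 0 < deriv (Vq p δ lam μ q r) x := by
  rw [(hasDerivAt_Vq hδp hlam hμ hq r x).deriv]
  have hP : 0 < p - δ := sub_pos.2 hδp
  have hs := qp_pos (lam := lam) hP hμ hq
  have ht := qm_neg (lam := lam) hP hμ hq
  have hC := Cconst_nonneg hp hlam hμ hq hr
  have hst : 0 < qp (p - δ) lam μ q - qm (p - δ) lam μ q := by linarith
  refine mul_pos (by positivity) (add_pos_of_pos_of_nonneg ?_ ?_)
  · refine mul_pos (by positivity) (sub_pos.2 (Real.exp_lt_exp.2 ?_))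
    exact mul_lt_mul_of_pos_right (by linarith) hx
  · refine mul_nonneg (by positivity) (sub_nonneg.2 ?_)
    exact (mul_nonpos_of_nonpos_of_nonneg ht.le (Real.exp_pos _).le).trans (by positivity)

lemma tendsto_deriv_Vq {p δ lam μ q r : ℝ} (hp : 0 < p) (hδp : δ < p) (hlam : 0 < lam)
    (hμ : 0 < μ) (hq : 0 < q) (hr : 0 < r) :
    Filter.Tendsto (deriv (Vq p δ lam μ q r)) Filter.atTop Filter.atTop := by
  have hP : 0 < p - δ := sub_pos.2 hδp
  have hs := qp_pos (lam := lam) hP hμ hq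
  have ht := qm_neg (lam := lam) hP hμ hq
  have hC := Cconst_nonneg hp hlam hμ hq hr
  have hst : 0 < qp (p - δ) lam μ q - qm (p - δ) lam μ q := by linarith
  have hlin : Filter.Tendsto (fun x : ℝ =>
      1 / ((p - δ) * (qp (p - δ) lam μ q - qm (p - δ) lam μ q)) *
        (Real.exp (q * r) * μ * q * (qp (p - δ) lam μ q * x))) Filter.atTop Filter.atTop :=
    ((Filter.tendsto_id.const_mul_atTop hs).const_mul_atTop (by positivity)).const_mul_atTop
      (by positivity)
  refine Filter.tendsto_atTop_mono' _ ?_ hlin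
  filter_upwards [Filter.eventually_ge_atTop 0] with x hx
  rw [(hasDerivAt_Vq hδp hlam hμ hq r x).deriv]
  have h1 := Real.add_one_le_exp (qp (p - δ) lam μ q * x)
  have h2 : Real.exp (qm (p - δ) lam μ q * x) ≤ 1 :=
    Real.exp_le_one_iff.2 (mul_nonpos_of_nonpos_of_nonneg ht.le hx)
  have h3 : 0 ≤ p * Cconst p lam μ q r *
      (qp (p - δ) lam μ q * Real.exp (qp (p - δ) lam μ q * x) -
        qm (p - δ) lam μ q * Real.exp (qm (p - δ) lam μ q * x)) := by
    refine mul_nonneg (by positivity) (sub_nonneg.2 ?_)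
    exact (mul_nonpos_of_nonpos_of_nonneg ht.le (Real.exp_pos _).le).trans (by positivity)
  refine mul_le_mul_of_nonneg_left (le_add_of_le_of_nonneg ?_ h3) (by positivity)
  exact mul_le_mul_of_nonneg_left (by linarith) (by positivity)

/-! ### Minimizing the cost ratio of a general function -/

lemma exists_minimizer_cost_ratio {V : ℝ → ℝ} {β : ℝ} (hβ : 0 < β) (hV : Differentiable ℝ V)
    (hpos : ∀ x, 0 < x → 0 < deriv V x)
    (htop : Filter.Tendsto (deriv V) Filter.atTop Filter.atTop) :
    ∃ c₁ c₂ : ℝ, 0 ≤ c₁ ∧ c₁ + β < c₂ ∧ ∀ d₁ d₂ : ℝ, 0 ≤ d₁ → d₁ + β < d₂ →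
      (V c₂ - V c₁) / (c₂ - c₁ - β) ≤ (V d₂ - V d₁) / (d₂ - d₁ - β) := by
  have hmono : StrictMonoOn V (Set.Ici 0) :=
    strictMonoOn_of_deriv_pos (convex_Ici 0) hV.continuous.continuousOn
      (by simpa [interior_Ici] using hpos)
  have hlt : ∀ x y, 0 ≤ x → x < y → V x < V y := fun x y hx hxy =>
    hmono hx (hx.trans hxy.le) hxy
  set G := V (β + 1) - V 0 with hG
  have hGpos : 0 < G := sub_pos.2 (hlt _ _ le_rfl (by linarith))
  obtain ⟨M, hM0, hM⟩ : ∃ M : ℝ, 0 ≤ M ∧ ∀ x, M ≤ x → G + 1 ≤ deriv V x := by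
    obtain ⟨M, hM⟩ := Filter.eventually_atTop.1 (htop.eventually_ge_atTop (G + 1))
    exact ⟨max M 0, le_max_right _ _, fun x hx => hM x ((le_max_left _ _).trans hx)⟩
  have hgrow : ∀ x y, M ≤ x → x ≤ y → (G + 1) * (y - x) ≤ V y - V x := by
    intro x y hx hxy
    refine Convex.mul_sub_le_image_sub_of_le_deriv (convex_Ici M) hV.continuous.continuousOn
      hV.differentiableOn (fun z hz => hM z ?_) x hx y (hx.trans hxy) hxy
    rw [interior_Ici] at hz
    exact le_of_lt hz
  obtain ⟨x₀, hx₀, hmin⟩ := isCompact_Icc.exists_isMinOn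
    (Set.nonempty_Icc.2 hM0) (f := fun x => V (x + β) - V x)
    ((hV.continuous.comp (continuous_id.add continuous_const)).sub hV.continuous).continuousOn
  set η := V (x₀ + β) - V x₀ with hη
  have hηpos : 0 < η := sub_pos.2 (hlt _ _ hx₀.1 (by linarith))
  -- Outside a compact set the ratio exceeds its value `G` at `(0, β + 1)`.
  have hlevel : ∀ d₁ d₂ : ℝ, 0 ≤ d₁ → d₁ + β < d₂ → (V d₂ - V d₁) / (d₂ - d₁ - β) ≤ G →
      d₁ ≤ M ∧ d₁ + β + η / G ≤ d₂ ∧ d₂ ≤ (G + 1) * M := by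
    intro d₁ d₂ h1 h2 h
    rw [div_le_iff₀ (by linarith)] at h
    have hd₁ : d₁ ≤ M := by
      by_contra! hc
      nlinarith [hgrow d₁ d₂ hc.le (by linarith)]
    refine ⟨hd₁, ?_, ?_⟩
    · have h3 : η ≤ V (d₁ + β) - V d₁ := hmin ⟨h1, hd₁⟩
      have h4 := hlt (d₁ + β) d₂ (by linarith) h2
      have : η / G ≤ d₂ - d₁ - β := by
        rw [div_le_iff₀ hGpos]; linarith
      linarith
    · by_contra! hc
      have hMd : M ≤ d₂ := by nlinarith
      have h3 := hgrow M d₂ le_rfl hMd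
      have h4 : V d₁ ≤ V M := hmono.monotoneOn h1 hM0 hd₁
      nlinarith
  set K : Set (ℝ × ℝ) := (Set.Icc 0 M ×ˢ Set.Icc 0 ((G + 1) * M)) ∩
    {z | z.1 + β + η / G ≤ z.2} with hK
  have hKc : IsCompact K := (isCompact_Icc.prod isCompact_Icc).inter_right
    (isClosed_le (by fun_prop) (by fun_prop))
  have hmem : ∀ d₁ d₂ : ℝ, 0 ≤ d₁ → d₁ + β < d₂ → (V d₂ - V d₁) / (d₂ - d₁ - β) ≤ G →
      (d₁, d₂) ∈ K := fun d₁ d₂ h1 h2 h =>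
    have ⟨a, b, c⟩ := hlevel d₁ d₂ h1 h2 h
    ⟨⟨⟨h1, a⟩, ⟨by linarith, c⟩⟩, b⟩
  have hbase : ((0 : ℝ), β + 1) ∈ K := hmem _ _ le_rfl (by linarith) (by simp [hG])
  have hηG : 0 < η / G := div_pos hηpos hGpos
  have hKdom : ∀ z ∈ K, 0 < z.2 - z.1 - β := fun z hz => by
    have : z.1 + β + η / G ≤ z.2 := hz.2
    linarith
  obtain ⟨c, hc, hcmin⟩ := hKc.exists_isMinOn ⟨_, hbase⟩
    (f := fun z : ℝ × ℝ => (V z.2 - V z.1) / (z.2 - z.1 - β))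
    (ContinuousOn.div
      ((hV.continuous.comp continuous_snd).sub (hV.continuous.comp continuous_fst)).continuousOn
      (by fun_prop) fun z hz => (hKdom z hz).ne')
  refine ⟨c.1, c.2, hc.1.1.1, by linarith [hKdom c hc], fun d₁ d₂ h1 h2 => ?_⟩
  by_cases h : (V d₂ - V d₁) / (d₂ - d₁ - β) ≤ G
  · exact hcmin (hmem d₁ d₂ h1 h2 h)
  · refine le_trans ?_ (le_of_not_ge h)
    simpa [hG] using hcmin hbase

lemma first_order_conditions_of_minimizer {V : ℝ → ℝ} {β c₁ c₂ : ℝ} (hV : Differentiable ℝ V)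
    (h1 : 0 ≤ c₁) (h2 : c₁ + β < c₂)
    (hmin : ∀ d₁ d₂ : ℝ, 0 ≤ d₁ → d₁ + β < d₂ →
      (V c₂ - V c₁) / (c₂ - c₁ - β) ≤ (V d₂ - V d₁) / (d₂ - d₁ - β)) :
    deriv V c₂ = (V c₂ - V c₁) / (c₂ - c₁ - β) ∧ (deriv V c₁ = deriv V c₂ ∨ c₁ = 0) := by
  set g := (V c₂ - V c₁) / (c₂ - c₁ - β) with hg
  have hgeq : V c₂ - V c₁ = g * (c₂ - c₁ - β) := by
    rw [hg, div_mul_cancel₀]; linarith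
  have hge : ∀ d₁ d₂ : ℝ, 0 ≤ d₁ → d₁ + β < d₂ → g * (d₂ - d₁ - β) ≤ V d₂ - V d₁ :=
    fun d₁ d₂ hd₁ hd₂ => (le_div_iff₀ (by linarith)).1 (hmin d₁ d₂ hd₁ hd₂)
  have hderiv : ∀ x, HasDerivAt (fun y => V y - g * y) (deriv V x - g) x := fun x => by
    exact ((hV x).hasDerivAt.sub ((hasDerivAt_id x).const_mul g)).congr_deriv (by simp)
  have e2 : deriv V c₂ = g := by
    have hloc : IsLocalMin (fun y => V y - g * y) c₂ := by
      filter_upwards [lt_mem_nhds h2] with y hy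
      linarith [hge c₁ y h1 hy]
    linarith [hloc.hasDerivAt_eq_zero (hderiv c₂)]
  refine ⟨e2, h1.eq_or_lt.symm.imp (fun h => ?_) Eq.symm⟩
  have hloc : IsLocalMax (fun y => V y - g * y) c₁ := by
    filter_upwards [lt_mem_nhds h, gt_mem_nhds (show c₁ < c₂ - β by linarith)] with y hy hy'
    linarith [hge y c₂ hy.le (by linarith)]
  linarith [hloc.hasDerivAt_eq_zero (hderiv c₁)]

theorem impulse_policy_first_order_conditions_CL (p δ lam μ q r β : ℝ)
    (hp : 0 < p) (hδ : 0 < δ) (hδp : δ < p) (hlam : 0 < lam) (hμ : 0 < μ)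
    (hq : 0 < q) (hr : 0 < r) (hβ : 0 < β) :
    (∃ c₁ c₂ : ℝ, 0 ≤ c₁ ∧ c₁ + β < c₂ ∧
      ∀ d₁ d₂ : ℝ, 0 ≤ d₁ → d₁ + β < d₂ →
        gfun p δ lam μ q r β c₁ c₂ ≤ gfun p δ lam μ q r β d₁ d₂) ∧
    ∀ c₁ c₂ : ℝ, 0 ≤ c₁ → c₁ + β < c₂ →
      (∀ d₁ d₂ : ℝ, 0 ≤ d₁ → d₁ + β < d₂ →
        gfun p δ lam μ q r β c₁ c₂ ≤ gfun p δ lam μ q r β d₁ d₂) →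
      deriv (Vq p δ lam μ q r) c₂
          = (Vq p δ lam μ q r c₂ - Vq p δ lam μ q r c₁) / (c₂ - c₁ - β) ∧
        (deriv (Vq p δ lam μ q r) c₁ = deriv (Vq p δ lam μ q r) c₂ ∨ c₁ = 0) := by
  have hV : Differentiable ℝ (Vq p δ lam μ q r) := fun x =>
    (hasDerivAt_Vq hδp hlam hμ hq r x).differentiableAt
  exact ⟨exists_minimizer_cost_ratio hβ hV (fun _ hx => deriv_Vq_pos hp hδp hlam hμ hq hr hx)
      (tendsto_deriv_Vq hp hδp hlam hμ hq hr),
    fun _ _ h1 h2 hmin => first_order_conditions_of_minimizer hV h1 h2 hmin⟩
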